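/- Let T > 0, θ > 0 and σ > 0, and let E = (E(t))_{0≤t≤T} be a jointly measurable real-valued process with continuous sample paths and E(0) = 0 on a probability space (Ω, F, P). Set M = sup_{0≤t≤T} |E(t)| and R = sup_{0≤s,t≤T} |E(t) − E(s)|. Then there exist constants 0 < k₁ ≤ k₂ and ε₀ > 0 with k₁ ε^σ ≤ P(M ≤ ε) ≤ k₂ ε^σ for all ε ∈ (0, ε₀] if and only if there exist constants 0 < c ≤ C and a₀ > 0 with c a^{−θσ} ≤ E[ e^{−a R^{1/θ}} ] ≤ C a^{−θσ} for all a ≥ a₀. -/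

import Mathlib

open MeasureTheory Filter Topology

/-!
Write `G ε = P (M ≤ ε)` and `L a = E[exp (-a R^{1/θ})]`. Since `E 0 = 0`, the pathwise inequalities
`M ≤ R ≤ 2 M` hold, and they link `G` and `L` through two elementary estimates:

* `e⁻¹ G (a^{-θ} / 2) ≤ L a`, which is Markov's inequality, because `M ≤ a^{-θ} / 2` forces
  `a R^{1/θ} ≤ 1` (`exp_mul_smallBall_le_laplace`);
* `L a ≤ G ((K / a)^θ) + e^{-K/2} L (a / 2)`, obtained by splitting the expectation according to
  whether `a R^{1/θ} ≤ K` (`laplace_le_smallBall_add`).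

The weak-order Tauberian theorem follows from these two estimates alone. The first one transfers the
lower bound from `G` to `L` and the upper bound from `L` to `G`. The second one, with `K` so large
that the factor `e^{-K/2}` absorbs the other constants, transfers the upper bound from `G` to `L`
(iterating along `a, a/2, a/4, …`, in `laplace_upper`) and the lower bound from `L` to `G`
(`smallBall_lower`).
-/

/-! ### Elementary inequalities -/

lemma exists_exp_neg_half_le {δ : ℝ} (hδ : 0 < δ) : ∃ K : ℝ, 0 < K ∧ Real.exp (-(K / 2)) ≤ δ := by
  refine ⟨2 * (1 / δ), by positivity, ?_⟩
  have h : 1 / δ ≤ Real.exp (1 / δ) := by linarith [Real.add_one_le_exp (1 / δ)]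
  rw [mul_div_cancel_left₀ _ two_ne_zero, Real.exp_neg]
  exact inv_le_of_inv_le₀ hδ (by simpa using h)

lemma half_rpow_neg {a : ℝ} (ha : 0 < a) (ρ : ℝ) : (a / 2) ^ (-ρ) = 2 ^ ρ * a ^ (-ρ) := by
  rw [Real.div_rpow ha.le zero_le_two, Real.rpow_neg zero_le_two ρ, div_inv_eq_mul, mul_comm]

/-! ### The weak-order Tauberian argument -/

section Tauberian

variable {θ σ : ℝ} {G L : ℝ → ℝ}

lemma laplace_lower (hθ : 0 < θ)
    (h1 : ∀ a, 0 < a → Real.exp (-1) * G (a ^ (-θ) / 2) ≤ L a)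
    {k ε₀ : ℝ} (hk : 0 < k) (hε₀ : 0 < ε₀) (hG : ∀ ε ∈ Set.Ioc 0 ε₀, k * ε ^ σ ≤ G ε) :
    ∃ c a₀ : ℝ, 0 < c ∧ 0 < a₀ ∧ ∀ a, a₀ ≤ a → c * a ^ (-(θ * σ)) ≤ L a := by
  refine ⟨Real.exp (-1) * (k / 2 ^ σ), (2 * ε₀) ^ (-θ⁻¹), by positivity, by positivity,
    fun a ha => ?_⟩
  have ha0 : 0 < a := lt_of_lt_of_le (by positivity) ha
  have hε : a ^ (-θ) ≤ 2 * ε₀ := by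
    have := Real.rpow_le_rpow_of_nonpos (by positivity) ha (neg_nonpos.2 hθ.le)
    rwa [← Real.rpow_mul (by positivity), neg_mul_neg, inv_mul_cancel₀ hθ.ne', Real.rpow_one]
      at this
  refine le_trans (le_of_eq ?_) ((mul_le_mul_of_nonneg_left
    (hG (a ^ (-θ) / 2) ⟨by positivity, by linarith⟩) (Real.exp_pos _).le).trans (h1 a ha0))
  rw [Real.div_rpow (by positivity) zero_le_two, ← Real.rpow_mul ha0.le, neg_mul]
  ring

/-- The bound `L a ≤ D a^{-θσ}` is proved by induction on `n` for `a ≤ 2 ^ n`: it is trivial for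
`a ≤ 1`, and the recursive estimate `h2` passes from `a / 2` to `a`. -/
lemma laplace_upper (hθ : 0 < θ) (hσ : 0 < σ) (hG1 : ∀ ε, G ε ≤ 1) (hL1 : ∀ a, 0 < a → L a ≤ 1)
    (h2 : ∀ a K, 0 < a → 0 < K → L a ≤ G ((K / a) ^ θ) + Real.exp (-(K / 2)) * L (a / 2))
    {k ε₀ : ℝ} (hε₀ : 0 < ε₀) (hG : ∀ ε ∈ Set.Ioc 0 ε₀, G ε ≤ k * ε ^ σ) :
    ∃ C : ℝ, 0 < C ∧ ∀ a, 0 < a → L a ≤ C * a ^ (-(θ * σ)) := by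
  set k' := max k (ε₀ ^ (-σ)) with hk'
  have hk'0 : 0 < k' := lt_of_lt_of_le (by positivity) (le_max_right _ _)
  have hG' : ∀ ε, 0 < ε → G ε ≤ k' * ε ^ σ := by
    intro ε hε
    rcases le_or_gt ε ε₀ with h | h
    · exact (hG ε ⟨hε, h⟩).trans
        (mul_le_mul_of_nonneg_right (le_max_left _ _) (by positivity))
    · calc G ε ≤ 1 := hG1 ε
        _ = ε₀ ^ (-σ) * ε₀ ^ σ := by rw [← Real.rpow_add hε₀]; simp
        _ ≤ k' * ε ^ σ := by
          gcongr
          exact le_max_right _ _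
  obtain ⟨K, hK, hKe⟩ := exists_exp_neg_half_le (δ := 1 / (2 * 2 ^ (θ * σ))) (by positivity)
  set D := max 1 (2 * (k' * K ^ (θ * σ))) with hD
  have hD0 : 0 < D := lt_of_lt_of_le one_pos (le_max_left _ _)
  have key : ∀ n : ℕ, ∀ a, 0 < a → a ≤ 2 ^ n → L a ≤ D * a ^ (-(θ * σ)) := by
    intro n
    induction n with
    | zero =>
      intro a ha ha1
      have h : 1 ≤ a ^ (-(θ * σ)) :=
        Real.one_le_rpow_of_pos_of_le_one_of_nonpos ha (by simpa using ha1)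
          (neg_nonpos.2 (by positivity))
      calc L a ≤ 1 := hL1 a ha
        _ = 1 * 1 := by ring
        _ ≤ D * a ^ (-(θ * σ)) := mul_le_mul (le_max_left _ _) h zero_le_one hD0.le
    | succ n ih =>
      intro a ha han
      have hih := ih (a / 2) (by positivity) (by rw [pow_succ] at han; linarith)
      rw [half_rpow_neg ha] at hih
      have hA := hG' ((K / a) ^ θ) (by positivity)
      have e : (K / a) ^ (θ * σ) = K ^ (θ * σ) * a ^ (-(θ * σ)) := by
        rw [Real.div_rpow hK.le ha.le, div_eq_mul_inv, ← Real.rpow_neg ha.le]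
      rw [← Real.rpow_mul (by positivity), e] at hA
      have hB : Real.exp (-(K / 2)) * L (a / 2) ≤ D / 2 * a ^ (-(θ * σ)) := by
        calc _ ≤ Real.exp (-(K / 2)) * (D * (2 ^ (θ * σ) * a ^ (-(θ * σ)))) := by gcongr
          _ ≤ 1 / (2 * 2 ^ (θ * σ)) * (D * (2 ^ (θ * σ) * a ^ (-(θ * σ)))) := by gcongr
          _ = D / 2 * a ^ (-(θ * σ)) := by field_simp
      have hC : k' * (K ^ (θ * σ) * a ^ (-(θ * σ))) ≤ D / 2 * a ^ (-(θ * σ)) := by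
        rw [← mul_assoc]
        refine mul_le_mul_of_nonneg_right ?_ (by positivity)
        linarith [le_max_right 1 (2 * (k' * K ^ (θ * σ)))]
      linarith [h2 a K ha hK]
  refine ⟨D, hD0, fun a ha => ?_⟩
  obtain ⟨n, hn⟩ := pow_unbounded_of_one_lt a one_lt_two
  exact key n a ha hn.le

lemma smallBall_upper (hθ : 0 < θ)
    (h1 : ∀ a, 0 < a → Real.exp (-1) * G (a ^ (-θ) / 2) ≤ L a)
    {C a₀ : ℝ} (hC : 0 < C) (ha₀ : 0 < a₀) (hL : ∀ a, a₀ ≤ a → L a ≤ C * a ^ (-(θ * σ))) :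
    ∃ k ε₀ : ℝ, 0 < k ∧ 0 < ε₀ ∧ ∀ ε ∈ Set.Ioc 0 ε₀, G ε ≤ k * ε ^ σ := by
  refine ⟨Real.exp 1 * C * 2 ^ σ, a₀ ^ (-θ) / 2, by positivity, by positivity, fun ε hε => ?_⟩
  have hε0 : 0 < ε := hε.1
  have ha : a₀ ≤ (2 * ε) ^ (-θ⁻¹) := by
    have := Real.rpow_le_rpow_of_nonpos (z := -θ⁻¹) (by positivity : 0 < 2 * ε)
      (by linarith [hε.2] : 2 * ε ≤ a₀ ^ (-θ)) (neg_nonpos.2 (by positivity))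
    rwa [← Real.rpow_mul ha₀.le, neg_mul_neg, mul_inv_cancel₀ hθ.ne', Real.rpow_one] at this
  have h := (h1 _ (ha₀.trans_le ha)).trans (hL _ ha)
  have e1 : ((2 * ε) ^ (-θ⁻¹)) ^ (-θ) / 2 = ε := by
    rw [← Real.rpow_mul (by positivity), neg_mul_neg, inv_mul_cancel₀ hθ.ne', Real.rpow_one]
    ring
  have e2 : ((2 * ε) ^ (-θ⁻¹)) ^ (-(θ * σ)) = 2 ^ σ * ε ^ σ := by
    rw [← Real.rpow_mul (by positivity), neg_mul_neg, inv_mul_cancel_left₀ hθ.ne',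
      Real.mul_rpow zero_le_two hε0.le]
  rw [e1, e2] at h
  calc G ε = Real.exp 1 * (Real.exp (-1) * G ε) := by
        rw [← mul_assoc, ← Real.exp_add]; simp
    _ ≤ Real.exp 1 * (C * (2 ^ σ * ε ^ σ)) := by gcongr
    _ = _ := by ring

lemma smallBall_lower (hθ : 0 < θ)
    (h2 : ∀ a K, 0 < a → 0 < K → L a ≤ G ((K / a) ^ θ) + Real.exp (-(K / 2)) * L (a / 2))
    {c C a₀ : ℝ} (hc : 0 < c) (hC : 0 < C) (ha₀ : 0 < a₀)
    (hLl : ∀ a, a₀ ≤ a → c * a ^ (-(θ * σ)) ≤ L a)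
    (hLu : ∀ a, a₀ ≤ a → L a ≤ C * a ^ (-(θ * σ))) :
    ∃ k ε₀ : ℝ, 0 < k ∧ 0 < ε₀ ∧ ∀ ε ∈ Set.Ioc 0 ε₀, k * ε ^ σ ≤ G ε := by
  obtain ⟨K, hK, hKe⟩ := exists_exp_neg_half_le (δ := c / (2 * C * 2 ^ (θ * σ))) (by positivity)
  refine ⟨c / 2 * K ^ (-(θ * σ)), (2 * a₀ / K) ^ (-θ), by positivity, by positivity,
    fun ε hε => ?_⟩
  have hε0 : 0 < ε := hε.1
  -- The scale `a` at which the threshold `(K / a) ^ θ` equals `ε`.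
  set a := K * ε ^ (-θ⁻¹) with ha_def
  have ha0 : 0 < a := by positivity
  have ha : 2 * a₀ ≤ a := by
    have := Real.rpow_le_rpow_of_nonpos (z := -θ⁻¹) hε0 hε.2 (neg_nonpos.2 (by positivity))
    rw [← Real.rpow_mul (by positivity), neg_mul_neg, mul_inv_cancel₀ hθ.ne', Real.rpow_one,
      div_le_iff₀ hK] at this
    linarith
  have e1 : (K / a) ^ θ = ε := by
    rw [ha_def, div_mul_cancel_left₀ hK.ne', ← Real.rpow_neg hε0.le, neg_neg,
      ← Real.rpow_mul hε0.le, inv_mul_cancel₀ hθ.ne', Real.rpow_one]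
  have e2 : a ^ (-(θ * σ)) = K ^ (-(θ * σ)) * ε ^ σ := by
    rw [ha_def, Real.mul_rpow hK.le (by positivity), ← Real.rpow_mul hε0.le, neg_mul_neg,
      inv_mul_cancel_left₀ hθ.ne']
  have h := h2 a K ha0 hK
  rw [e1] at h
  have hl := hLl a (by linarith)
  have hu := hLu (a / 2) (by linarith)
  rw [half_rpow_neg ha0] at hu
  have hB : Real.exp (-(K / 2)) * L (a / 2) ≤ c / 2 * a ^ (-(θ * σ)) := by
    calc _ ≤ Real.exp (-(K / 2)) * (C * (2 ^ (θ * σ) * a ^ (-(θ * σ)))) := by gcongr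
      _ ≤ c / (2 * C * 2 ^ (θ * σ)) * (C * (2 ^ (θ * σ) * a ^ (-(θ * σ)))) := by gcongr
      _ = c / 2 * a ^ (-(θ * σ)) := by field_simp
  rw [mul_assoc, ← e2]
  linarith

end Tauberian

/-! ### The supremum and the oscillation of a path -/

section Pathwise

variable {T : ℝ} {f : ℝ → ℝ}

lemma bddAbove_abs (hf : ContinuousOn f (Set.Icc 0 T)) :
    BddAbove (Set.range fun t : Set.Icc (0 : ℝ) T => |f t|) := by
  have h : Continuous fun t : Set.Icc (0 : ℝ) T => |f t| := hf.domRestrict.abs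
  exact isCompact_range h |>.bddAbove

/-- The iterated supremum defining the oscillation is an honest one: it is bounded by `r` exactly
when all the increments are. -/
lemma oscillation_le_iff (hT : 0 < T) (hf : ContinuousOn f (Set.Icc 0 T)) (r : ℝ) :
    (⨆ s : Set.Icc (0 : ℝ) T, ⨆ t : Set.Icc (0 : ℝ) T, |f t - f s|) ≤ r ↔
      ∀ s t : Set.Icc (0 : ℝ) T, |f t - f s| ≤ r := by
  have : Nonempty (Set.Icc (0 : ℝ) T) := ⟨⟨0, le_rfl, hT.le⟩⟩
  obtain ⟨B, hB⟩ := bddAbove_abs hf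
  have hB' : ∀ s t : Set.Icc (0 : ℝ) T, |f t - f s| ≤ B + B := fun s t =>
    (abs_sub _ _).trans (add_le_add (hB ⟨t, rfl⟩) (hB ⟨s, rfl⟩))
  rw [ciSup_le_iff ⟨B + B, by rintro _ ⟨s, rfl⟩; exact ciSup_le (hB' s)⟩]
  refine forall_congr' fun s => ciSup_le_iff ⟨B + B, ?_⟩
  rintro _ ⟨t, rfl⟩
  exact hB' s t

lemma sup_abs_le_iff (hT : 0 < T) (hf : ContinuousOn f (Set.Icc 0 T)) (r : ℝ) :
    (⨆ t : Set.Icc (0 : ℝ) T, |f t|) ≤ r ↔ ∀ t : Set.Icc (0 : ℝ) T, |f t| ≤ r := by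
  have : Nonempty (Set.Icc (0 : ℝ) T) := ⟨⟨0, le_rfl, hT.le⟩⟩
  exact ciSup_le_iff (bddAbove_abs hf)

end Pathwise

/-- By path continuity, the oscillation is at most `r` as soon as the increments between points of a
countable dense set of times are. -/
lemma measurable_oscillation {Ω : Type*} [MeasurableSpace Ω] {T : ℝ} (hT : 0 < T)
    {E : ℝ → Ω → ℝ} (hEmeas : Measurable (Function.uncurry E))
    (hEcont : ∀ ω, ContinuousOn (fun t => E t ω) (Set.Icc 0 T)) :
    Measurable fun ω => ⨆ s : Set.Icc (0 : ℝ) T, ⨆ t : Set.Icc (0 : ℝ) T,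
      |E (t : ℝ) ω - E (s : ℝ) ω| := by
  have : Nonempty (Set.Icc (0 : ℝ) T) := ⟨⟨0, le_rfl, hT.le⟩⟩
  have hE : ∀ t, Measurable (E t) := fun t => hEmeas.comp measurable_prodMk_left
  set d := TopologicalSpace.denseSeq (Set.Icc (0 : ℝ) T) with hd
  have hdd : DenseRange d := TopologicalSpace.denseRange_denseSeq _
  refine measurable_of_Iic fun r => ?_
  have hset : ((fun ω => ⨆ s : Set.Icc (0 : ℝ) T, ⨆ t : Set.Icc (0 : ℝ) T,
      |E (t : ℝ) ω - E (s : ℝ) ω|) ⁻¹' Set.Iic r) =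
      ⋂ p : ℕ × ℕ, {ω | |E (d p.2) ω - E (d p.1) ω| ≤ r} := by
    ext ω
    simp only [Set.mem_preimage, Set.mem_Iic, Set.mem_iInter, Set.mem_ofPred_eq]
    rw [oscillation_le_iff hT (hEcont ω)]
    refine ⟨fun h p => h _ _, fun h s t => ?_⟩
    have hc : Continuous fun t : Set.Icc (0 : ℝ) T => E t ω := (hEcont ω).domRestrict
    exact (hdd.prodMap hdd).induction_on
      (p := fun q : Set.Icc (0 : ℝ) T × Set.Icc (0 : ℝ) T => |E q.2 ω - E q.1 ω| ≤ r) (s, t)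
      (isClosed_le ((hc.comp continuous_snd).sub (hc.comp continuous_fst)).abs continuous_const)
      (fun p => h p)
  rw [hset]
  exact MeasurableSet.iInter fun p => measurableSet_le ((hE _).sub (hE _)).abs measurable_const

/-! ### The two estimates linking small balls and the Laplace transform -/

lemma exp_neg_le_one {Ω : Type*} {θ : ℝ} {R : Ω → ℝ} (hR0 : ∀ ω, 0 ≤ R ω) {a : ℝ} (ha : 0 < a)
    (ω : Ω) : Real.exp (-(a * R ω ^ (1 / θ))) ≤ 1 :=
  Real.exp_le_one_iff.2 (neg_nonpos.2 (mul_nonneg ha.le (Real.rpow_nonneg (hR0 ω) _)))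

section Estimates

variable {Ω : Type*} [MeasurableSpace Ω] {P : Measure Ω} [IsProbabilityMeasure P] {θ : ℝ}
  {M R : Ω → ℝ}

lemma integrable_exp_neg (hRm : Measurable R) (hR0 : ∀ ω, 0 ≤ R ω) {a : ℝ} (ha : 0 < a) :
    Integrable (fun ω => Real.exp (-(a * R ω ^ (1 / θ)))) P := by
  refine Integrable.of_bound (C := 1) ?_ (ae_of_all _ fun ω => ?_)
  · exact (Real.measurable_exp.comp
      ((hRm.pow_const (1 / θ)).const_mul a).neg).aestronglyMeasurable
  · rw [Real.norm_eq_abs, abs_of_pos (Real.exp_pos _)]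
    exact exp_neg_le_one hR0 ha ω

lemma exp_mul_smallBall_le_laplace (hθ : 0 < θ) (hRm : Measurable R) (hR0 : ∀ ω, 0 ≤ R ω)
    (hRM : ∀ ω, R ω ≤ 2 * M ω) {a : ℝ} (ha : 0 < a) :
    Real.exp (-1) * (P {ω | M ω ≤ a ^ (-θ) / 2}).toReal ≤
      ∫ ω, Real.exp (-(a * R ω ^ (1 / θ))) ∂P := by
  refine le_trans ?_ (mul_meas_ge_le_integral_of_nonneg
    (ae_of_all _ fun ω => (Real.exp_pos _).le) (integrable_exp_neg hRm hR0 ha) (Real.exp (-1)))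
  refine mul_le_mul_of_nonneg_left (measureReal_mono fun ω hω => ?_) (Real.exp_pos _).le
  simp only [Set.mem_ofPred_eq] at hω ⊢
  have hr : R ω ≤ a ^ (-θ) := by linarith [hRM ω]
  have h : R ω ^ (1 / θ) ≤ a⁻¹ := by
    refine (Real.rpow_le_rpow (hR0 ω) hr (by positivity)).trans_eq ?_
    rw [← Real.rpow_mul ha.le, neg_mul, mul_one_div_cancel hθ.ne', Real.rpow_neg_one]
  have h' := mul_le_mul_of_nonneg_left h ha.le
  rw [mul_inv_cancel₀ ha.ne'] at h'
  exact Real.exp_le_exp.2 (neg_le_neg h')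

lemma laplace_le_smallBall_add (hθ : 0 < θ) (hRm : Measurable R) (hR0 : ∀ ω, 0 ≤ R ω)
    (hMR : ∀ ω, M ω ≤ R ω) {a K : ℝ} (ha : 0 < a) (hK : 0 < K) :
    ∫ ω, Real.exp (-(a * R ω ^ (1 / θ))) ∂P ≤ (P {ω | M ω ≤ (K / a) ^ θ}).toReal +
      Real.exp (-(K / 2)) * ∫ ω, Real.exp (-(a / 2 * R ω ^ (1 / θ))) ∂P := by
  set S := {ω | R ω ≤ (K / a) ^ θ} with hS
  have hSm : MeasurableSet S := measurableSet_le hRm measurable_const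
  have hi : Integrable (S.indicator fun _ => (1 : ℝ)) P := (integrable_const 1).indicator hSm
  have hi2 := (integrable_exp_neg (P := P) (θ := θ) hRm hR0 (half_pos ha)).const_mul
    (Real.exp (-(K / 2)))
  calc ∫ ω, Real.exp (-(a * R ω ^ (1 / θ))) ∂P
      ≤ ∫ ω, (S.indicator (fun _ => (1 : ℝ)) ω +
          Real.exp (-(K / 2)) * Real.exp (-(a / 2 * R ω ^ (1 / θ)))) ∂P := by
        refine integral_mono (integrable_exp_neg hRm hR0 ha) (hi.add hi2) fun ω => ?_
        by_cases hω : ω ∈ S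
        · simp only [Set.indicator_of_mem hω]
          have := exp_neg_le_one (θ := θ) hR0 ha ω
          have h0 : 0 ≤ Real.exp (-(K / 2)) * Real.exp (-(a / 2 * R ω ^ (1 / θ))) := by positivity
          linarith
        · simp only [Set.indicator_of_notMem hω, zero_add, ← Real.exp_add]
          have h : K / a ≤ R ω ^ (1 / θ) := by
            have := Real.rpow_le_rpow (z := 1 / θ) (by positivity) (not_le.1 hω).le
              (by positivity)
            rwa [← Real.rpow_mul (by positivity), mul_one_div_cancel hθ.ne', Real.rpow_one]
              at this
          rw [div_le_iff₀ ha] at h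
          exact Real.exp_le_exp.2 (by linarith)
    _ = P.real S + Real.exp (-(K / 2)) * ∫ ω, Real.exp (-(a / 2 * R ω ^ (1 / θ))) ∂P := by
        rw [integral_add hi hi2, integral_const_mul, integral_indicator_const _ hSm]
        simp
    _ ≤ _ := by
        gcongr
        exact measureReal_mono fun ω hω => (hMR ω).trans hω

end Estimates

open MeasureTheory Filter Topology

/-- **Weak-order equivalence between small deviations of the sup and the Laplace transform
of the maximal oscillation.**
For a continuous process `E` on `[0,T]` with `E(0) = 0`, setting
`M = sup_{0≤t≤T} |E(t)|` and `R = sup_{0≤s,t≤T} |E(t) − E(s)|`, one has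
`P(M ≤ ε) ≈ ε^σ` as `ε → 0+` if and only if `E[e^{−a R^{1/θ}}] ≈ a^{−θσ}` as `a → ∞`. -/
theorem smallBall_sup_iff_laplace_oscillation {Ω : Type*} [MeasurableSpace Ω]
    (P : Measure Ω) [IsProbabilityMeasure P] (T θ σ : ℝ) (hT : 0 < T) (hθ : 0 < θ)
    (hσ : 0 < σ) (E : ℝ → Ω → ℝ) (hEmeas : Measurable (Function.uncurry E))
    (hEcont : ∀ ω, ContinuousOn (fun t => E t ω) (Set.Icc 0 T))
    (hE0 : ∀ ω, E 0 ω = 0)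
    (M R : Ω → ℝ)
    (hM : ∀ ω, M ω = ⨆ t : Set.Icc (0 : ℝ) T, |E (t : ℝ) ω|)
    (hR : ∀ ω, R ω = ⨆ s : Set.Icc (0 : ℝ) T, ⨆ t : Set.Icc (0 : ℝ) T,
      |E (t : ℝ) ω - E (s : ℝ) ω|) :
    (∃ k₁ k₂ ε₀ : ℝ, 0 < k₁ ∧ k₁ ≤ k₂ ∧ 0 < ε₀ ∧
        ∀ ε ∈ Set.Ioc (0 : ℝ) ε₀,
          k₁ * ε ^ σ ≤ (P {ω | M ω ≤ ε}).toReal ∧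
            (P {ω | M ω ≤ ε}).toReal ≤ k₂ * ε ^ σ) ↔
      (∃ c C a₀ : ℝ, 0 < c ∧ c ≤ C ∧ 0 < a₀ ∧
        ∀ a : ℝ, a₀ ≤ a →
          c * a ^ (-(θ * σ)) ≤ ∫ ω, Real.exp (-(a * R ω ^ (1 / θ))) ∂P ∧
            (∫ ω, Real.exp (-(a * R ω ^ (1 / θ))) ∂P) ≤ C * a ^ (-(θ * σ))) := by
  have hMR : ∀ ω, M ω ≤ R ω := fun ω => by
    rw [hM, sup_abs_le_iff hT (hEcont ω)]
    intro t
    have := (oscillation_le_iff hT (hEcont ω) (R ω)).1 (hR ω).ge ⟨0, le_rfl, hT.le⟩ t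
    simpa [hE0] using this
  have hRM : ∀ ω, R ω ≤ 2 * M ω := fun ω => by
    rw [hR, oscillation_le_iff hT (hEcont ω)]
    intro s t
    have h := (sup_abs_le_iff hT (hEcont ω) (M ω)).1 (hM ω).ge
    linarith [abs_sub (E t ω) (E s ω), h s, h t]
  have hR0 : ∀ ω, 0 ≤ R ω := fun ω => by
    rw [hR]
    exact Real.iSup_nonneg fun s => Real.iSup_nonneg fun t => abs_nonneg _
  have hRm : Measurable R := by
    rw [funext hR]
    exact measurable_oscillation hT hEmeas hEcont
  have h1 : ∀ a, 0 < a → Real.exp (-1) * (P {ω | M ω ≤ a ^ (-θ) / 2}).toReal ≤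
      ∫ ω, Real.exp (-(a * R ω ^ (1 / θ))) ∂P :=
    fun a ha => exp_mul_smallBall_le_laplace hθ hRm hR0 hRM ha
  have h2 : ∀ a K, 0 < a → 0 < K →
      ∫ ω, Real.exp (-(a * R ω ^ (1 / θ))) ∂P ≤ (P {ω | M ω ≤ (K / a) ^ θ}).toReal +
        Real.exp (-(K / 2)) * ∫ ω, Real.exp (-(a / 2 * R ω ^ (1 / θ))) ∂P :=
    fun a K ha hK => laplace_le_smallBall_add hθ hRm hR0 hMR ha hK
  have hL1 : ∀ a, 0 < a → ∫ ω, Real.exp (-(a * R ω ^ (1 / θ))) ∂P ≤ 1 := fun a ha => by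
    refine (integral_mono (integrable_exp_neg hRm hR0 ha) (integrable_const 1)
      (exp_neg_le_one hR0 ha)).trans_eq (by simp)
  have hG1 : ∀ ε, (P {ω | M ω ≤ ε}).toReal ≤ 1 := fun ε => measureReal_le_one
  constructor
  · rintro ⟨k₁, k₂, ε₀, hk₁, -, hε₀, h⟩
    obtain ⟨c, a₀, hc, ha₀, hl⟩ := laplace_lower
      (G := fun ε => (P {ω | M ω ≤ ε}).toReal)
      (L := fun a => ∫ ω, Real.exp (-(a * R ω ^ (1 / θ))) ∂P)
      hθ h1 hk₁ hε₀ fun ε hε => (h ε hε).1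
    obtain ⟨C, -, hu⟩ := laplace_upper
      (G := fun ε => (P {ω | M ω ≤ ε}).toReal)
      (L := fun a => ∫ ω, Real.exp (-(a * R ω ^ (1 / θ))) ∂P)
      hθ hσ hG1 hL1 h2 hε₀ fun ε hε => (h ε hε).2
    refine ⟨c, max c C, a₀, hc, le_max_left _ _, ha₀, fun a ha => ⟨hl a ha, ?_⟩⟩
    have ha0 : 0 < a := ha₀.trans_le ha
    exact (hu a ha0).trans (mul_le_mul_of_nonneg_right (le_max_right _ _) (by positivity))
  · rintro ⟨c, C, a₀, hc, hcC, ha₀, h⟩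
    obtain ⟨k₂, ε₂, -, hε₂, hu⟩ := smallBall_upper
      (G := fun ε => (P {ω | M ω ≤ ε}).toReal)
      (L := fun a => ∫ ω, Real.exp (-(a * R ω ^ (1 / θ))) ∂P)
      hθ h1 (hc.trans_le hcC) ha₀ fun a ha => (h a ha).2
    obtain ⟨k₁, ε₁, hk₁, hε₁, hl⟩ := smallBall_lower
      (G := fun ε => (P {ω | M ω ≤ ε}).toReal)
      (L := fun a => ∫ ω, Real.exp (-(a * R ω ^ (1 / θ))) ∂P)
      hθ h2 hc (hc.trans_le hcC) ha₀ (fun a ha => (h a ha).1) fun a ha => (h a ha).2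
    refine ⟨k₁, max k₁ k₂, min ε₁ ε₂, hk₁, le_max_left _ _, lt_min hε₁ hε₂, fun ε hε =>
      ⟨hl ε ⟨hε.1, hε.2.trans (min_le_left _ _)⟩, ?_⟩⟩
    have hε0 : 0 < ε := hε.1
    exact (hu ε ⟨hε0, hε.2.trans (min_le_right _ _)⟩).trans
      (mul_le_mul_of_nonneg_right (le_max_right _ _) (by positivity))
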